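/- arXiv:2009.06130 — 5 statements merged into one kernel-verified Lean document; each statement's English description precedes it below -/
import Mathlib

section
/- Let c > 0 and let σ be a Borel probability measure on ℝ whose support is contained in [0,c]. Let μ be the pushforward of σ under the map r ↦ (r, c − r). Then μ is a Borel probability measure on ℝ² giving full measure to the line segment {(s,t) : s ≥ 0, t ≥ 0, s + t = c}, and for all k₁, k₂ ∈ ℕ the moments γ_{(k₁,k₂)} := ∫ s^{k₁} t^{k₂} dμ(s,t) satisfy γ_{(k₁+1,k₂)} + γ_{(k₁,k₂+1)} = c · γ_{(k₁,k₂)}, and additionally γ_{(k,0)} = ∫ r^k dσ(r) for all k ∈ ℕ. -/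
open MeasureTheory

/-- The (topological) support of a Borel measure: the set of points all of whose
open neighborhoods have positive measure. -/
def msupp {X : Type*} [TopologicalSpace X] [MeasurableSpace X] (μ : Measure X) : Set X :=
  {x | ∀ U : Set X, IsOpen U → x ∈ U → 0 < μ U}

/-- Every subnormal unilateral weighted shift admits a spherically quasinormal
embedding, obtained by pushing forward its Berger measure under `r ↦ (r, c - r)`. -/
theorem stmt_1 (c : ℝ) (hc : 0 < c)
    (σ : Measure ℝ) [IsProbabilityMeasure σ] (hsupp : msupp σ ⊆ Set.Icc (0 : ℝ) c)
    (μ : Measure (ℝ × ℝ)) (hμ : μ = σ.map (fun r => (r, c - r)))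
    (γ : ℕ → ℕ → ℝ) (hγ : ∀ k₁ k₂ : ℕ, γ k₁ k₂ = ∫ x : ℝ × ℝ, x.1 ^ k₁ * x.2 ^ k₂ ∂μ) :
    IsProbabilityMeasure μ ∧
    μ {x : ℝ × ℝ | 0 ≤ x.1 ∧ 0 ≤ x.2 ∧ x.1 + x.2 = c} = 1 ∧
    (∀ k₁ k₂ : ℕ, γ (k₁ + 1) k₂ + γ k₁ (k₂ + 1) = c * γ k₁ k₂) ∧
    (∀ k : ℕ, γ k 0 = ∫ r : ℝ, r ^ k ∂σ) := by
  have hnull : σ (Set.Icc (0 : ℝ) c)ᶜ = 0 := by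
    refine measure_null_of_locally_null _ fun x hx => ?_
    have hx' : x ∉ msupp σ := fun h => hx (hsupp h)
    simp only [msupp, Set.mem_setOf_eq, not_forall] at hx'
    obtain ⟨U, hU, hxU, h0⟩ := hx'
    exact ⟨U, mem_nhdsWithin_of_mem_nhds (hU.mem_nhds hxU), by simpa using h0⟩
  have hae : ∀ᵐ r ∂σ, r ∈ Set.Icc (0 : ℝ) c := hnull
  have hm : Measurable (fun r : ℝ => (r, c - r)) := by fun_prop
  have hprob : IsProbabilityMeasure μ := by
    rw [hμ]; exact Measure.isProbabilityMeasure_map hm.aemeasurable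
  have hg : ∀ k₁ k₂ : ℕ, γ k₁ k₂ = ∫ r, r ^ k₁ * (c - r) ^ k₂ ∂σ := by
    intro k₁ k₂
    rw [hγ, hμ, integral_map hm.aemeasurable]
    exact (by fun_prop : Continuous fun x : ℝ × ℝ => x.1 ^ k₁ * x.2 ^ k₂).aestronglyMeasurable
  have hint : ∀ k₁ k₂ : ℕ, Integrable (fun r : ℝ => r ^ k₁ * (c - r) ^ k₂) σ := by
    intro k₁ k₂
    refine Integrable.of_bound (C := c ^ k₁ * c ^ k₂)
      (by fun_prop : Continuous fun r : ℝ => r ^ k₁ * (c - r) ^ k₂).aestronglyMeasurable ?_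
    filter_upwards [hae] with r hr
    obtain ⟨h1, h2⟩ := hr
    have h3 : 0 ≤ c - r := by linarith
    rw [Real.norm_of_nonneg (by positivity)]
    gcongr
    linarith
  refine ⟨hprob, ?_, ?_, ?_⟩
  · have hS : MeasurableSet {x : ℝ × ℝ | 0 ≤ x.1 ∧ 0 ≤ x.2 ∧ x.1 + x.2 = c} :=
      ((isClosed_le continuous_const continuous_fst).inter
        ((isClosed_le continuous_const continuous_snd).inter
          (isClosed_eq (continuous_fst.add continuous_snd) continuous_const))).measurableSet
    rw [hμ, Measure.map_apply hm hS, ← prob_compl_eq_zero_iff (hm hS)]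
    refine measure_mono_null ?_ hnull
    intro r hr hr'
    exact hr ⟨hr'.1, sub_nonneg.2 hr'.2, by simp⟩
  · intro k₁ k₂
    rw [hg, hg, hg, ← integral_add (hint _ _) (hint _ _), ← integral_const_mul]
    congr 1
    ext r
    ring
  · intro k
    rw [hg]
    simp
end

section
/- Let m, n be positive integers and let μ be a finite Borel measure on ℝ² with compact support contained in [0,∞)×[0,∞). If ∫ s^{k₁} t^{k₂} (t^m − s^n) dμ(s,t) = 0 for all k₁, k₂ ∈ ℕ, then t^m = s^n for μ-almost every (s,t); equivalently, μ({(s,t) : t^m ≠ s^n}) = 0. -/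
open MeasureTheory

/-- If all moments of a compactly supported finite measure on `ℝ₊²` against the
polynomial `t^m - s^n` vanish, then the measure is supported on the curve `t^m = s^n`. -/
theorem stmt_3 (m n : ℕ) (hm : 1 ≤ m) (hn : 1 ≤ n)
    (μ : Measure (ℝ × ℝ)) [IsFiniteMeasure μ]
    (hcompact : IsCompact (msupp μ))
    (hsupp : msupp μ ⊆ Set.Ici (0 : ℝ) ×ˢ Set.Ici (0 : ℝ))
    (hmom : ∀ k₁ k₂ : ℕ, ∫ x : ℝ × ℝ, x.1 ^ k₁ * x.2 ^ k₂ * (x.2 ^ m - x.1 ^ n) ∂μ = 0) :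
    μ {x : ℝ × ℝ | x.2 ^ m ≠ x.1 ^ n} = 0 := by
  have hms : msupp μ = μ.support := by
    rw [Measure.support_eq_forall_isOpen]
    ext x
    simp only [msupp, Set.mem_ofPred_eq]
    exact ⟨fun h U hx hU => h U hU hx, fun h U hU hx => h U hx hU⟩
  have hae : ∀ᵐ x ∂μ, x ∈ msupp μ := by
    rw [hms]; exact Measure.support_mem_ae
  have hint : ∀ f : ℝ × ℝ → ℝ, Continuous f → Integrable f μ := by
    intro f hf
    obtain ⟨C, hC⟩ := hcompact.exists_bound_of_continuousOn hf.continuousOn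
    exact Integrable.of_bound hf.aestronglyMeasurable C (hae.mono hC)
  have h0 : ∫ x : ℝ × ℝ, (x.2 ^ m - x.1 ^ n) ^ 2 ∂μ = 0 := by
    have h1 := hmom 0 m
    have h2 := hmom n 0
    have h3 := integral_sub (hint (fun x => x.1 ^ 0 * x.2 ^ m * (x.2 ^ m - x.1 ^ n)) (by fun_prop))
      (hint (fun x => x.1 ^ n * x.2 ^ 0 * (x.2 ^ m - x.1 ^ n)) (by fun_prop))
    rw [h1, h2, sub_zero] at h3
    rw [← h3]
    congr 1
    ext x
    ring
  rw [integral_eq_zero_iff_of_nonneg (fun x => sq_nonneg _) (hint (fun x : ℝ × ℝ => (x.2 ^ m - x.1 ^ n) ^ 2) (by fun_prop))] at h0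
  have h4 : ∀ᵐ x ∂μ, x.2 ^ m = x.1 ^ n := by
    filter_upwards [h0] with x hx
    exact sub_eq_zero.mp (pow_eq_zero_iff (two_ne_zero) |>.mp hx)
  exact h4
end

section
/- Let σ be a Borel probability measure on ℝ with support contained in [0,∞), let m ≥ 1 be an integer, and let 0 ≤ i ≤ m−1 with γ_i := ∫ t^i dσ(t) > 0. Let σ_i be the Borel probability measure on ℝ defined as the pushforward under t ↦ t^m of the measure γ_i⁻¹ · t^i dσ(t) (in particular σ₀ is the pushforward of σ under t ↦ t^m). Then: (i) if r ∈ supp σ and r ≠ 0, then r^m ∈ supp σ_i; (ii) if r ∈ supp σ_i and r ≠ 0, then r^{1/m} ∈ supp σ; (iii) 0 ∈ supp σ if and only if 0 ∈ supp σ₀. -/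
open MeasureTheory

theorem root_mem_aux (σ τ : Measure ℝ) (hτ : τ ≪ σ)
    (hsupp : msupp σ ⊆ Set.Ici (0 : ℝ)) (m : ℕ) (hm : 1 ≤ m) (r : ℝ)
    (hr : r ∈ msupp (τ.map (fun t => t ^ m))) : r ^ ((m : ℝ)⁻¹) ∈ msupp σ := by
  intro U hU hrU
  have hc : Continuous (fun y : ℝ => y ^ ((m : ℝ)⁻¹)) :=
    Real.continuous_rpow_const (by positivity)
  have hV := hU.preimage hc
  have h1 := hr _ hV hrU
  have hp : Continuous (fun t : ℝ => t ^ m) := continuous_pow m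
  rw [Measure.map_apply hp.measurable hV.measurableSet] at h1
  have h2 := pos_iff_ne_zero.2 fun h => h1.ne' (hτ h)
  obtain ⟨t, ht, hts⟩ := Measure.nonempty_inter_support_of_pos h2
  have hts' : t ∈ msupp σ := fun W hW htW =>
    (Measure.mem_support_iff_forall t).1 hts W (hW.mem_nhds htW)
  have h0 : 0 ≤ t := hsupp hts'
  have htU : (t ^ m) ^ ((m : ℝ)⁻¹) ∈ U := ht
  rw [Real.pow_rpow_inv_natCast h0 (by omega)] at htU
  exact hts' U hU htU

/-- Relation between the support of the Berger measure `σ` of a subnormal weighted shift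
`W_ω` and the supports of the Berger measures `σᵢ` of the summands of `W_ω^m`. -/
theorem stmt_7 (σ : Measure ℝ) [IsProbabilityMeasure σ]
    (hsupp : msupp σ ⊆ Set.Ici (0 : ℝ))
    (m : ℕ) (hm : 1 ≤ m) (i : ℕ) (hi : i ≤ m - 1)
    (γ : ℝ) (hγ : γ = ∫ t : ℝ, t ^ i ∂σ) (hγpos : 0 < γ)
    (σi : Measure ℝ)
    (hσi : σi = (σ.withDensity (fun t => ENNReal.ofReal (γ⁻¹ * t ^ i))).map (fun t => t ^ m))
    (σ0 : Measure ℝ) (hσ0 : σ0 = σ.map (fun t => t ^ m)) :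
    (∀ r : ℝ, r ∈ msupp σ → r ≠ 0 → r ^ m ∈ msupp σi) ∧
    (∀ r : ℝ, r ∈ msupp σi → r ≠ 0 → r ^ ((m : ℝ)⁻¹) ∈ msupp σ) ∧
    ((0 : ℝ) ∈ msupp σ ↔ (0 : ℝ) ∈ msupp σ0) := by
  have hp : Continuous (fun t : ℝ => t ^ m) := continuous_pow m
  subst hσi hσ0
  refine ⟨?_, ?_, ?_, ?_⟩
  · intro r hr hr0 U hU hrU
    have hrpos : 0 < r := lt_of_le_of_ne (hsupp hr) (Ne.symm hr0)
    have hV := hU.preimage hp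
    rw [Measure.map_apply hp.measurable hU.measurableSet, pos_iff_ne_zero, Ne,
      withDensity_apply_eq_zero (by fun_prop)]
    refine (lt_of_lt_of_le (hr _ (hV.inter isOpen_Ioi) ⟨hrU, hrpos⟩) (measure_mono ?_)).ne'
    rintro t ⟨ht, ht0⟩
    have ht0' : 0 < t := ht0
    refine ⟨?_, ht⟩
    have : 0 < γ⁻¹ * t ^ i := by positivity
    simpa using this
  · intro r hr _
    exact root_mem_aux σ _ (withDensity_absolutelyContinuous _ _) hsupp m hm r hr
  · intro h0 U hU hU0
    have hV := hU.preimage hp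
    rw [Measure.map_apply hp.measurable hU.measurableSet]
    refine h0 _ hV ?_
    have hm0 : m ≠ 0 := by omega
    simpa [hm0] using hU0
  · intro h0
    have h := root_mem_aux σ σ Measure.AbsolutelyContinuous.rfl hsupp m hm 0 h0
    have hm0 : m ≠ 0 := by omega
    rwa [Real.zero_rpow (by simpa using hm0)] at h
end

section
/- Let σ be a Borel probability measure on ℝ with support contained in [0,1], and let ω : ℕ → ℝ be a sequence with 0 < ω_k < 1 for all k and such that ∏_{i=0}^{k−1} ω_i² = ∫ r^k dσ(r) for every k ∈ ℕ. Define τ_k := ω_k · √(1 − ω_{k+1}²)/√(1 − ω_k²). Then for every k ∈ ℕ: ∏_{i=0}^{k−1} τ_i² = (1 − ω_0²)⁻¹ · ∫ r^k (1 − r) dσ(r); in particular, 1 − ω_0² = ∫ (1 − r) dσ(r). -/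
open MeasureTheory

/-- In the construction of a spherically isometric embedding of a contractive subnormal
shift with weights `ω` and Berger measure `σ`, the first-row weights
`τ_k = ω_k √(1 − ω_{k+1}²)/√(1 − ω_k²)` have moments
`∏_{i<k} τᵢ² = (1 − ω₀²)⁻¹ ∫ r^k (1 − r) dσ(r)`. -/
theorem stmt_14 (σ : Measure ℝ) [IsProbabilityMeasure σ]
    (hsupp : msupp σ ⊆ Set.Icc (0 : ℝ) 1)
    (ω : ℕ → ℝ) (hω : ∀ k, 0 < ω k ∧ ω k < 1)
    (hmom : ∀ k : ℕ, ∏ i ∈ Finset.range k, (ω i) ^ 2 = ∫ r : ℝ, r ^ k ∂σ)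
    (τ : ℕ → ℝ)
    (hτ : ∀ k, τ k = ω k * Real.sqrt (1 - (ω (k + 1)) ^ 2) / Real.sqrt (1 - (ω k) ^ 2)) :
    (∀ k : ℕ, ∏ i ∈ Finset.range k, (τ i) ^ 2
        = (1 - (ω 0) ^ 2)⁻¹ * ∫ r : ℝ, r ^ k * (1 - r) ∂σ) ∧
    1 - (ω 0) ^ 2 = ∫ r : ℝ, (1 - r) ∂σ := by
  have hpos : ∀ k : ℕ, 0 < ∏ i ∈ Finset.range k, (ω i) ^ 2 := fun k =>
    Finset.prod_pos fun i _ => pow_pos (hω i).1 2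
  have hint : ∀ k : ℕ, Integrable (fun r : ℝ => r ^ k) σ := by
    intro k
    by_contra h
    have h1 := hpos k
    rw [hmom k, integral_undef h] at h1
    exact lt_irrefl _ h1
  have h1 : ∀ k, 0 < 1 - (ω k) ^ 2 := by
    intro k
    have := hω k
    nlinarith
  have hI : ∀ k : ℕ, ∫ r : ℝ, r ^ k * (1 - r) ∂σ
      = (∏ i ∈ Finset.range k, (ω i) ^ 2) * (1 - (ω k) ^ 2) := by
    intro k
    have e : (fun r : ℝ => r ^ k * (1 - r)) = fun r => r ^ k - r ^ (k + 1) := by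
      funext r
      ring
    rw [e, integral_sub (hint k) (hint (k + 1)), ← hmom, ← hmom, Finset.prod_range_succ]
    ring
  have hτ2 : ∀ k, (τ k) ^ 2 = (ω k) ^ 2 * (1 - (ω (k + 1)) ^ 2) / (1 - (ω k) ^ 2) := by
    intro k
    rw [hτ, div_pow, mul_pow, Real.sq_sqrt (h1 _).le, Real.sq_sqrt (h1 _).le]
  refine ⟨fun k => ?_, ?_⟩
  · rw [hI]
    induction k with
    | zero => simp [inv_mul_cancel₀ (h1 0).ne']
    | succ k ih =>
      rw [Finset.prod_range_succ, ih, hτ2, Finset.prod_range_succ]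
      have a := (h1 k).ne'
      have b := (h1 0).ne'
      field_simp
  · have := hI 0
    simpa using this.symm
end

section
/- Let x ∈ ℝ with 0 < x, and define γ : ℕ → ℝ by γ(0) = 1 and γ(n) = 2x/(n+1) for n ≥ 1. Then the following are equivalent: (i) for every n ∈ ℕ, the 3×3 real Hankel matrix A(n) with entries A(n)_{ij} = γ(n + i + j), 0 ≤ i, j ≤ 2, is positive semidefinite; (ii) x ≤ 9/16. -/
/-- The quadratic form of the `m`-th Hilbert-type Hankel matrix is nonnegative. -/
lemma hilbert_form_nonneg (m a b c : ℝ) (hm : 0 < m) :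
    0 ≤ a ^ 2 / m + 2 * a * b / (m + 1) + (b ^ 2 + 2 * a * c) / (m + 2)
      + 2 * b * c / (m + 3) + c ^ 2 / (m + 4) := by
  have h : a ^ 2 / m + 2 * a * b / (m + 1) + (b ^ 2 + 2 * a * c) / (m + 2)
      + 2 * b * c / (m + 3) + c ^ 2 / (m + 4) =
      1 / m * (a + m * b / (m + 1) + m * c / (m + 2)) ^ 2
      + 1 / ((m + 1) ^ 2 * (m + 2)) * (b + 2 * (m + 1) * c / (m + 3)) ^ 2
      + 4 / ((m + 2) ^ 2 * (m + 3) ^ 2 * (m + 4)) * c ^ 2 := by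
    field_simp
    ring
  rw [h]
  positivity

/-- 2-hyponormality of the rank-one perturbation of the Bergman shift with weights
`√x, √(2/3), √(3/4), …`: the Hankel moment matrices `(γ(n+i+j))_{0 ≤ i,j ≤ 2}` are all
positive semidefinite if and only if `x ≤ 9/16`. -/
theorem stmt_18 (x : ℝ) (hx : 0 < x)
    (γ : ℕ → ℝ) (hγ0 : γ 0 = 1) (hγ : ∀ n : ℕ, 1 ≤ n → γ n = 2 * x / (n + 1))
    (A : ℕ → Matrix (Fin 3) (Fin 3) ℝ)
    (hA : ∀ n (i j : Fin 3), A n i j = γ (n + i + j)) :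
    (∀ n : ℕ, (A n).PosSemidef) ↔ x ≤ 9 / 16 := by
  have hform : ∀ n (v : Fin 3 → ℝ), star v ⬝ᵥ (A n).mulVec v =
      γ n * v 0 ^ 2 + γ (n + 1) * (2 * v 0 * v 1) + γ (n + 2) * (v 1 ^ 2 + 2 * v 0 * v 2)
        + γ (n + 3) * (2 * v 1 * v 2) + γ (n + 4) * v 2 ^ 2 := by
    intro n v
    simp [dotProduct, Matrix.mulVec, Fin.sum_univ_three, hA, add_assoc]
    ring
  have h1 : γ 1 = x := by rw [hγ 1 (by norm_num)]; push_cast; ring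
  have h2 : γ 2 = 2 * x / 3 := by rw [hγ 2 (by norm_num)]; push_cast; ring
  have h3 : γ 3 = x / 2 := by rw [hγ 3 (by norm_num)]; push_cast; ring
  have h4 : γ 4 = 2 * x / 5 := by rw [hγ 4 (by norm_num)]; push_cast; ring
  constructor
  · intro h
    have h0 := (h 0).dotProduct_mulVec_nonneg ![3, -12, 10]
    rw [hform] at h0
    simp [hγ0, h1, h2, h3, h4] at h0
    linarith
  · intro h n
    refine Matrix.PosSemidef.of_dotProduct_mulVec_nonneg ?_ ?_
    · ext i j
      simp [hA, add_right_comm]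
    · intro v
      rw [hform]
      rcases Nat.eq_zero_or_pos n with rfl | hn
      · simp only [zero_add, hγ0, h1, h2, h3, h4]
        have e : 1 * v 0 ^ 2 + x * (2 * v 0 * v 1) + 2 * x / 3 * (v 1 ^ 2 + 2 * v 0 * v 2)
            + x / 2 * (2 * v 1 * v 2) + 2 * x / 5 * v 2 ^ 2 =
            (1 - 16 * x / 9) * v 0 ^ 2 + 2 * x * (1 / 3 * (v 1 + 3 * v 0 / 2 + 3 * v 2 / 4) ^ 2
              + 1 / 80 * (v 2 - 10 * v 0 / 3) ^ 2) := by ring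
        rw [e]
        have : 0 ≤ 1 - 16 * x / 9 := by linarith
        positivity
      · rw [hγ n hn, hγ (n + 1) (by omega), hγ (n + 2) (by omega), hγ (n + 3) (by omega),
          hγ (n + 4) (by omega)]
        have := mul_nonneg (mul_nonneg zero_le_two hx.le)
          (hilbert_form_nonneg (n + 1) (v 0) (v 1) (v 2) (by positivity))
        push_cast
        convert this using 1
        rw [show (n : ℝ) + 1 + 2 = n + 2 + 1 by ring, show (n : ℝ) + 1 + 3 = n + 3 + 1 by ring,
          show (n : ℝ) + 1 + 4 = n + 4 + 1 by ring]
        ring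
end
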